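/- Let n = 2m and let τ_{2m} : ℂCl(2m) → End_ℂ(⋀W_m) be the spinor representation, τ_{2m}(u + v̄) = √2 ε(u) − √2 ι(v̄). Then the even and odd parts 𝕊⁺_{2m} = ⋀^{even}W_m and 𝕊⁻_{2m} = ⋀^{odd}W_m are invariant under τ_{2m}(a) for every a in the even subalgebra ℂCl⁰(2m); each of 𝕊⁺_{2m} and 𝕊⁻_{2m} is a simple module over ℂCl⁰(2m); and 𝕊⁺_{2m} and 𝕊⁻_{2m} are not isomorphic as ℂCl⁰(2m)-modules. -/

import Mathlib

set_option synthInstance.maxHeartbeats 1000000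
set_option maxHeartbeats 1000000

noncomputable section

open Complex

/-- The quadratic form `Q(x) = -(x₁² + ⋯ + x_n²)` on `ℂⁿ`. -/
def Qc (n : ℕ) : QuadraticForm ℂ (Fin n → ℂ) :=
  QuadraticMap.weightedSumSquares ℂ (fun _ : Fin n => (-1 : ℂ))

/-- The isotropic vector `f_j = (e_{2j-1} + i e_{2j})/√2` (0-indexed: coords `2j`, `2j+1`). -/
def fvec (n j : ℕ) : Fin n → ℂ := fun i =>
  if (i : ℕ) = 2 * j then ((Real.sqrt 2 : ℂ))⁻¹
  else if (i : ℕ) = 2 * j + 1 then Complex.I * ((Real.sqrt 2 : ℂ))⁻¹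
  else 0

/-- The isotropic vector `f̄_j = -(e_{2j-1} - i e_{2j})/√2`. -/
def fbarvec (n j : ℕ) : Fin n → ℂ := fun i =>
  if (i : ℕ) = 2 * j then -((Real.sqrt 2 : ℂ))⁻¹
  else if (i : ℕ) = 2 * j + 1 then Complex.I * ((Real.sqrt 2 : ℂ))⁻¹
  else 0

/-- The standard basis vector `e` with a `1` in (0-indexed) coordinate `j`. -/
def evec (n j : ℕ) : Fin n → ℂ := fun i => if (i : ℕ) = j then 1 else 0

/-- The maximal isotropic subspace `W = span(f₁, …, f_m)` of `ℂⁿ`. -/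
def Wsub (n m : ℕ) : Submodule ℂ (Fin n → ℂ) :=
  Submodule.span ℂ (Set.range fun j : Fin m => fvec n j)

/-- `W̄ = span(f̄₁, …, f̄_m)`. -/
def Wbarsub (n m : ℕ) : Submodule ℂ (Fin n → ℂ) :=
  Submodule.span ℂ (Set.range fun j : Fin m => fbarvec n j)

/-- The Dirac spinor space `𝕊 = ⋀ W`. -/
abbrev Spinor (n m : ℕ) := ExteriorAlgebra ℂ (Wsub n m)

/-- The bilinear extension `⟨v, ·⟩ = Σ_i v_i (·)_i` of the standard inner product,
as a linear functional. -/
def pairingLin (n : ℕ) (v : Fin n → ℂ) : (Fin n → ℂ) →ₗ[ℂ] ℂ :=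
  ∑ i, v i • (LinearMap.proj i : (Fin n → ℂ) →ₗ[ℂ] ℂ)

/-- Exterior multiplication `ε(u)` by `u ∈ W` on `⋀ W`. -/
def extMul (n m : ℕ) (u : Wsub n m) : Module.End ℂ (Spinor n m) :=
  LinearMap.mulLeft ℂ (ExteriorAlgebra.ι ℂ u)

/-- Interior multiplication (contraction) `ι(v̄)` on `⋀ W` by `v̄ ∈ ℂⁿ`, with respect to the
pairing `⟨v̄, u⟩`; it is the unique degree `-1` antiderivation with `ι(v̄) u = ⟨v̄, u⟩` on `W`. -/
def intMul (n m : ℕ) (v : Fin n → ℂ) : Module.End ℂ (Spinor n m) :=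
  CliffordAlgebra.contractLeft (Q := (0 : QuadraticForm ℂ (Wsub n m)))
    ((pairingLin n v).comp (Wsub n m).subtype)

/-- The parity operator `γ`, acting by `(-1)^k` on `⋀^k W`. -/
def parity (n m : ℕ) : Module.End ℂ (Spinor n m) :=
  (CliffordAlgebra.involute (Q := (0 : QuadraticForm ℂ (Wsub n m)))).toLinearMap

/-- `γ` as a linear equivalence (it is an involution). -/
def parityEquiv (n m : ℕ) : Spinor n m ≃ₗ[ℂ] Spinor n m :=
  LinearEquiv.ofInvolutive (parity n m) (fun x => CliffordAlgebra.involute_involute x)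

/-- The even part `𝕊⁺ = ⋀^{even} W`. -/
def SpinorEven (n m : ℕ) : Submodule ℂ (Spinor n m) :=
  CliffordAlgebra.evenOdd (0 : QuadraticForm ℂ (Wsub n m)) 0

/-- The odd part `𝕊⁻ = ⋀^{odd} W`. -/
def SpinorOdd (n m : ℕ) : Submodule ℂ (Spinor n m) :=
  CliffordAlgebra.evenOdd (0 : QuadraticForm ℂ (Wsub n m)) 1

/-!
The generators of the Clifford algebra act on `⋀ M` exactly by the operators `w ∧ · + d ⌋ ·`.
Each of these exchanges the parities, and the even subalgebra acts by products of evenly many of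
them.

A vector `x` with `b j ∧ (bⱼ* ⌋ x) = 0` for all `j` is a scalar: `1 - (b j ∧ ·) (bⱼ* ⌋ ·)` is the
algebra endomorphism of `⋀ M` induced by the projection of `M` that kills `b j`, and the composition
of all these projections is zero. Two consequences follow.

* Contracting a nonzero vector as long as possible leaves a nonzero scalar, and exterior
  multiplication then generates `⋀ M`; so `⋀ M` is irreducible. If `U` is a nonzero even-invariant
  subspace of one half, the operators map `U` into the other half and the sum of `U` and its image
  is invariant, hence all of `⋀ M`, so `U` is the whole half.
* The even operators `(b j ∧ ·) (bⱼ* ⌋ ·)` kill `1`, so they kill the image of `1` under any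
  intertwiner `⋀^{even} M → ⋀^{odd} M`. This image is therefore an odd scalar, which is zero.
-/

section FieldOperators

open CliffordAlgebra (evenOdd)

variable {R M : Type*} [CommRing R] [AddCommGroup M] [Module R M]

variable (R) in
/-- The creation operator `w ∧ ·` on `⋀ M`; this is `ε(w)`. -/
def creation : M →ₗ[R] Module.End R (ExteriorAlgebra R M) :=
  LinearMap.mul R (ExteriorAlgebra R M) ∘ₗ ExteriorAlgebra.ι R

/-- The annihilation operator `d ⌋ ·` on `⋀ M`; this is `ι(v̄)` for the functional `d = ⟨v̄, ·⟩`. -/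
def annihilation : Module.Dual R M →ₗ[R] Module.End R (ExteriorAlgebra R M) :=
  CliffordAlgebra.contractLeft (Q := (0 : QuadraticForm R M))

variable (R M) in
/-- The space of field operators `w ∧ · + d ⌋ ·` on `⋀ M`, through which the generators of a
Clifford algebra act in its spinor representation. -/
def fieldOperators : Submodule R (Module.End R (ExteriorAlgebra R M)) :=
  LinearMap.range (creation R) ⊔ LinearMap.range annihilation

theorem creation_mem_fieldOperators (w : M) : creation R w ∈ fieldOperators R M :=
  Submodule.mem_sup_left ⟨w, rfl⟩

theorem annihilation_mem_fieldOperators (d : Module.Dual R M) :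
    annihilation d ∈ fieldOperators R M :=
  Submodule.mem_sup_right ⟨d, rfl⟩

theorem creation_apply (w : M) (x : ExteriorAlgebra R M) :
    creation R w x = ExteriorAlgebra.ι R w * x :=
  rfl

theorem annihilation_algebraMap (d : Module.Dual R M) (r : R) :
    annihilation d (algebraMap R (ExteriorAlgebra R M) r) = 0 :=
  CliffordAlgebra.contractLeft_algebraMap _ d r

theorem annihilation_one (d : Module.Dual R M) : annihilation d 1 = 0 :=
  CliffordAlgebra.contractLeft_one _ d

theorem annihilation_ι_mul (d : Module.Dual R M) (w : M) (x : ExteriorAlgebra R M) :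
    annihilation d (ExteriorAlgebra.ι R w * x) =
      d w • x - ExteriorAlgebra.ι R w * annihilation d x :=
  CliffordAlgebra.contractLeft_ι_mul d w x

theorem annihilation_annihilation (d : Module.Dual R M) (x : ExteriorAlgebra R M) :
    annihilation d (annihilation d x) = 0 :=
  CliffordAlgebra.contractLeft_contractLeft d x

theorem annihilation_comm (d d' : Module.Dual R M) (x : ExteriorAlgebra R M) :
    annihilation d (annihilation d' x) = -annihilation d' (annihilation d x) :=
  CliffordAlgebra.contractLeft_comm d d' x

theorem ι_mul_mem_evenOdd {Q : QuadraticForm R M} (w : M) {i : ZMod 2} {x : CliffordAlgebra Q}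
    (hx : x ∈ evenOdd Q i) : CliffordAlgebra.ι Q w * x ∈ evenOdd Q (i + 1) :=
  add_comm 1 i ▸ SetLike.mul_mem_graded (CliffordAlgebra.ι_mem_evenOdd_one Q w) hx

theorem contractLeft_mem_evenOdd {Q : QuadraticForm R M} (d : Module.Dual R M) {i : ZMod 2}
    {x : CliffordAlgebra Q} (hx : x ∈ evenOdd Q i) :
    CliffordAlgebra.contractLeft d x ∈ evenOdd Q (i + 1) := by
  suffices ∀ n : ℕ, LinearMap.range (CliffordAlgebra.ι Q) ^ n ≤
      (evenOdd Q (n + 1)).comap (CliffordAlgebra.contractLeft d) from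
    (iSup_le fun ⟨n, hn⟩ => hn ▸ this n :
      evenOdd Q i ≤ (evenOdd Q (i + 1)).comap (CliffordAlgebra.contractLeft d)) hx
  intro n x hx
  induction hx using Submodule.pow_induction_on_left' with
  | algebraMap r => simp [CliffordAlgebra.contractLeft_algebraMap]
  | add x y n _ _ hx hy => exact add_mem hx hy
  | mem_mul _ hw n x hxn hx =>
    obtain ⟨w, rfl⟩ := hw
    have hx_mem : x ∈ evenOdd Q n := Submodule.mem_iSup_of_mem ⟨n, rfl⟩ hxn
    rw [Submodule.mem_comap, CliffordAlgebra.contractLeft_ι_mul, Nat.cast_succ]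
    refine sub_mem (Submodule.smul_mem _ _ ?_) (ι_mul_mem_evenOdd w hx)
    rwa [add_assoc, CharTwo.add_self_eq_zero, add_zero]

theorem fieldOperators_smul_evenOdd_le (i : ZMod 2) :
    fieldOperators R M • evenOdd (0 : QuadraticForm R M) i ≤
      evenOdd (0 : QuadraticForm R M) (i + 1) := by
  rw [fieldOperators, Submodule.sup_smul, sup_le_iff, Submodule.smul_le, Submodule.smul_le]
  constructor
  · rintro _ ⟨w, rfl⟩ x hx
    exact ι_mul_mem_evenOdd w hx
  · rintro _ ⟨d, rfl⟩ x hx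
    exact contractLeft_mem_evenOdd d hx

theorem disjoint_evenOdd_add_one (Q : QuadraticForm R M) (i : ZMod 2) :
    Disjoint (evenOdd Q i) (evenOdd Q (i + 1)) :=
  (DirectSum.Decomposition.isInternal (evenOdd Q)).submodule_iSupIndep.pairwiseDisjoint
    (by simp)

theorem exteriorAlgebra_evenOdd_ne_bot [Nontrivial M] (i : ZMod 2) :
    evenOdd (0 : QuadraticForm R M) i ≠ ⊥ := by
  have := Module.nontrivial R M
  refine (Submodule.ne_bot_iff _).2 ?_
  obtain rfl | rfl : i = 0 ∨ i = 1 := by decide +revert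
  · exact ⟨1, SetLike.one_mem_graded _, one_ne_zero (α := ExteriorAlgebra R M)⟩
  · obtain ⟨w, hw⟩ := exists_ne (0 : M)
    exact ⟨ExteriorAlgebra.ι R w, CliffordAlgebra.ι_mem_evenOdd_one _ w,
      (ExteriorAlgebra.ι_eq_zero_iff w).not.2 hw⟩

theorem exteriorAlgebra_map_id_sub_smulRight (d : Module.Dual R M) (w : M)
    (x : ExteriorAlgebra R M) :
    ExteriorAlgebra.map (LinearMap.id - d.smulRight w) x =
      x - creation R w (annihilation d x) := by
  induction x using CliffordAlgebra.left_induction with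
  | algebraMap r =>
    rw [annihilation_algebraMap, map_zero, sub_zero]
    exact AlgHom.commutes _ r
  | add x y hx hy => simp only [map_add, hx, hy]; abel
  | ι_mul x v hx =>
    change ExteriorAlgebra.map _ (ExteriorAlgebra.ι R v * x) =
      ExteriorAlgebra.ι R v * x - creation R w (annihilation d (ExteriorAlgebra.ι R v * x))
    have hwv : ExteriorAlgebra.ι R w * ExteriorAlgebra.ι R v =
        -(ExteriorAlgebra.ι R v * ExteriorAlgebra.ι R w) :=
      eq_neg_of_add_eq_zero_left (ExteriorAlgebra.ι_add_mul_swap w v)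
    simp only [map_mul, ExteriorAlgebra.map_apply_ι, hx, annihilation_ι_mul, creation_apply,
      LinearMap.sub_apply, LinearMap.id_apply, LinearMap.smulRight_apply, map_sub, map_smul,
      sub_mul, mul_sub, smul_mul_assoc, ← mul_assoc, hwv, neg_mul,
      ExteriorAlgebra.ι_sq_zero, zero_mul, smul_zero]
    abel

theorem exteriorAlgebra_map_zero_apply {N : Type*} [AddCommGroup N] [Module R N]
    (x : ExteriorAlgebra R M) :
    ExteriorAlgebra.map (0 : M →ₗ[R] N) x = algebraMap R _ (ExteriorAlgebra.algebraMapInv x) := by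
  suffices ExteriorAlgebra.map (0 : M →ₗ[R] N) =
      (Algebra.ofId R _).comp ExteriorAlgebra.algebraMapInv from DFunLike.congr_fun this x
  ext w
  simp [ExteriorAlgebra.algebraMapInv]

section Basis

variable {ι : Type*} (b : Module.Basis ι R M) {x : ExteriorAlgebra R M}

theorem exteriorAlgebra_map_id_sub_sum_coord_eq_self
    (hx : ∀ i, creation R (b i) (annihilation (b.coord i) x) = 0) (s : Finset ι) :
    ExteriorAlgebra.map (LinearMap.id - ∑ i ∈ s, (b.coord i).smulRight (b i)) x = x := by
  classical
  induction s using Finset.induction_on with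
  | empty => simp
  | insert j s hj ih =>
    have hcomp : LinearMap.id - ∑ i ∈ insert j s, (b.coord i).smulRight (b i) =
        (LinearMap.id - ∑ i ∈ s, (b.coord i).smulRight (b i)) ∘ₗ
          (LinearMap.id - (b.coord j).smulRight (b j)) := by
      have hsingle (r : R) : ∑ i ∈ s, Finsupp.single j r i • b i = 0 :=
        Finset.sum_eq_zero fun i hi => by
          rw [Finsupp.single_eq_of_ne (ne_of_mem_of_not_mem hi hj), zero_smul]
      ext v
      simp [Finset.sum_insert hj, sub_smul, hsingle, sub_sub]
    rw [hcomp, ← ExteriorAlgebra.map_comp_map, AlgHom.comp_apply,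
      exteriorAlgebra_map_id_sub_smulRight, hx, sub_zero, ih]

theorem eq_algebraMap_of_creation_annihilation_eq_zero [Finite ι]
    (hx : ∀ i, creation R (b i) (annihilation (b.coord i) x) = 0) :
    x = algebraMap R _ (ExteriorAlgebra.algebraMapInv x) := by
  have := Fintype.ofFinite ι
  have hid : LinearMap.id - ∑ i, (b.coord i).smulRight (b i) = 0 := by
    ext v
    simp [b.sum_repr]
  rw [← exteriorAlgebra_map_zero_apply, ← hid, exteriorAlgebra_map_id_sub_sum_coord_eq_self b hx]

end Basis

theorem exists_ne_zero_annihilation_eq_zero {U : Submodule R (ExteriorAlgebra R M)} (hU : U ≠ ⊥)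
    (hann : ∀ d : Module.Dual R M, ∀ x ∈ U, annihilation d x ∈ U)
    (s : Finset (Module.Dual R M)) :
    ∃ y ∈ U, y ≠ 0 ∧ ∀ d ∈ s, annihilation d y = 0 := by
  classical
  induction s using Finset.induction_on with
  | empty => simpa using Submodule.exists_mem_ne_zero_of_ne_bot hU
  | insert d s _ ih =>
    obtain ⟨y, hyU, hy, hys⟩ := ih
    by_cases hdy : annihilation d y = 0
    · exact ⟨y, hyU, hy, Finset.forall_mem_insert _ _ _ |>.2 ⟨hdy, hys⟩⟩
    · refine ⟨annihilation d y, hann d y hyU, hdy, Finset.forall_mem_insert _ _ _ |>.2 ⟨?_, ?_⟩⟩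
      · exact annihilation_annihilation d y
      · intro d' hd'
        rw [annihilation_comm, hys d' hd', map_zero, neg_zero]

theorem eq_top_of_one_mem_of_creation {U : Submodule R (ExteriorAlgebra R M)} (hone : 1 ∈ U)
    (hcr : ∀ w : M, ∀ x ∈ U, creation R w x ∈ U) : U = ⊤ := by
  refine eq_top_iff.2 fun x _ => ?_
  induction x using CliffordAlgebra.left_induction with
  | algebraMap r => rw [Algebra.algebraMap_eq_smul_one]; exact U.smul_mem r hone
  | add x y hx hy => exact U.add_mem (hx trivial) (hy trivial)
  | ι_mul x w hx => exact hcr w x (hx trivial)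

end FieldOperators

section Irreducibility

open CliffordAlgebra (evenOdd)

variable {K M : Type*} [Field K] [AddCommGroup M] [Module K M] [FiniteDimensional K M]
  {U : Submodule K (ExteriorAlgebra K M)}

theorem eq_bot_or_eq_top_of_fieldOperators_smul_le (hU : fieldOperators K M • U ≤ U) :
    U = ⊥ ∨ U = ⊤ := by
  classical
  refine or_iff_not_imp_left.2 fun hbot => ?_
  rw [Submodule.smul_le] at hU
  let b := Module.finBasis K M
  obtain ⟨y, hyU, hy, hann⟩ := exists_ne_zero_annihilation_eq_zero hbot
    (fun d => hU _ (annihilation_mem_fieldOperators d)) (Finset.univ.image b.coord)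
  have hscalar : y = algebraMap K _ (ExteriorAlgebra.algebraMapInv y) :=
    eq_algebraMap_of_creation_annihilation_eq_zero b fun i => by
      rw [hann _ (Finset.mem_image_of_mem _ (Finset.mem_univ i)), map_zero]
  rw [Algebra.algebraMap_eq_smul_one] at hscalar
  have hc : (ExteriorAlgebra.algebraMapInv y : K) ≠ 0 := fun h => hy (by rw [hscalar, h, zero_smul])
  have hone : (1 : ExteriorAlgebra K M) ∈ U := (U.smul_mem_iff hc).1 (hscalar ▸ hyU)
  exact eq_top_of_one_mem_of_creation hone fun w => hU _ (creation_mem_fieldOperators w)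

theorem eq_bot_or_eq_evenOdd_of_fieldOperators_smul_smul_le {i : ZMod 2}
    (hUi : U ≤ evenOdd (0 : QuadraticForm K M) i)
    (hU : fieldOperators K M • fieldOperators K M • U ≤ U) :
    U = ⊥ ∨ U = evenOdd (0 : QuadraticForm K M) i := by
  have hFU : fieldOperators K M • U ≤ evenOdd (0 : QuadraticForm K M) (i + 1) :=
    (smul_mono_right _ hUi).trans (fieldOperators_smul_evenOdd_le i)
  have hsup : fieldOperators K M • (U ⊔ fieldOperators K M • U) ≤ U ⊔ fieldOperators K M • U := by
    rw [Submodule.smul_sup, sup_comm U]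
    exact sup_le_sup_left hU _
  refine (eq_bot_or_eq_top_of_fieldOperators_smul_le hsup).imp (fun h => (sup_eq_bot_iff.1 h).1)
    fun h => ?_
  calc U = U ⊔ fieldOperators K M • U ⊓ evenOdd (0 : QuadraticForm K M) i := by
        rw [((disjoint_evenOdd_add_one _ i).symm.mono_left hFU).eq_bot, sup_bot_eq]
    _ = (U ⊔ fieldOperators K M • U) ⊓ evenOdd (0 : QuadraticForm K M) i :=
        (sup_inf_assoc_of_le _ hUi).symm
    _ = evenOdd (0 : QuadraticForm K M) i := by rw [h, top_inf_eq]

end Irreducibility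

section Representation

open CliffordAlgebra (evenOdd)

variable {R M V : Type*} [CommRing R] [AddCommGroup M] [Module R M] [AddCommGroup V] [Module R V]
  {Q : QuadraticForm R V} {τ : CliffordAlgebra Q →ₐ[R] Module.End R (ExteriorAlgebra R M)}

theorem apply_mem_evenOdd_of_mem_even
    (hτ : LinearMap.range (τ.toLinearMap ∘ₗ CliffordAlgebra.ι Q) ≤ fieldOperators R M)
    (i : ZMod 2) (a : CliffordAlgebra Q) (ha : a ∈ evenOdd Q 0) (x : ExteriorAlgebra R M)
    (hx : x ∈ evenOdd (0 : QuadraticForm R M) i) :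
    τ a x ∈ evenOdd (0 : QuadraticForm R M) i := by
  have hodd (v : V) {j : ZMod 2} {y : ExteriorAlgebra R M}
      (hy : y ∈ evenOdd (0 : QuadraticForm R M) j) :
      τ (CliffordAlgebra.ι Q v) y ∈ evenOdd (0 : QuadraticForm R M) (j + 1) :=
    fieldOperators_smul_evenOdd_le j (Submodule.smul_mem_smul (hτ ⟨v, rfl⟩) hy)
  induction a, ha using CliffordAlgebra.even_induction with
  | algebraMap r =>
    rw [AlgHom.commutes, Module.algebraMap_end_apply]
    exact Submodule.smul_mem _ _ hx
  | add a b _ _ ha hb => rw [map_add]; exact add_mem ha hb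
  | ι_mul_ι_mul v w a _ ha =>
    rw [map_mul, map_mul, Module.End.mul_apply, Module.End.mul_apply]
    simpa [add_assoc, CharTwo.add_self_eq_zero] using hodd v (hodd w ha)

theorem exists_mem_even_map_eq_mul
    (hτ : fieldOperators R M ≤ LinearMap.range (τ.toLinearMap ∘ₗ CliffordAlgebra.ι Q))
    {A B : Module.End R (ExteriorAlgebra R M)} (hA : A ∈ fieldOperators R M)
    (hB : B ∈ fieldOperators R M) : ∃ a ∈ evenOdd Q 0, τ a = A * B := by
  obtain ⟨v, rfl⟩ := hτ hA
  obtain ⟨w, rfl⟩ := hτ hB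
  exact ⟨_, CliffordAlgebra.ι_mul_ι_mem_evenOdd_zero Q v w, map_mul τ _ _⟩

theorem fieldOperators_smul_smul_le_of_even_invariant
    (hτ : fieldOperators R M ≤ LinearMap.range (τ.toLinearMap ∘ₗ CliffordAlgebra.ι Q))
    {U : Submodule R (ExteriorAlgebra R M)} (hU : ∀ a ∈ evenOdd Q 0, ∀ x ∈ U, τ a x ∈ U) :
    fieldOperators R M • fieldOperators R M • U ≤ U := by
  refine Submodule.smul_le.2 fun A hA y hy => ?_
  induction hy using Submodule.smul_induction_on' with
  | smul B hB x hx =>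
    obtain ⟨a, ha, hAB⟩ := exists_mem_even_map_eq_mul hτ hA hB
    rw [← mul_smul, ← hAB]
    exact hU a ha x hx
  | add y _ z _ hy hz => rw [smul_add]; exact add_mem hy hz

theorem even_intertwiner_apply_one [Module.Free R M] [Module.Finite R M]
    (hτ : fieldOperators R M ≤ LinearMap.range (τ.toLinearMap ∘ₗ CliffordAlgebra.ι Q))
    (g : evenOdd (0 : QuadraticForm R M) 0 →ₗ[R] evenOdd (0 : QuadraticForm R M) 1)
    (hg : ∀ a ∈ evenOdd Q 0, ∀ x y : evenOdd (0 : QuadraticForm R M) 0,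
      (y : ExteriorAlgebra R M) = τ a (x : ExteriorAlgebra R M) →
        (g y : ExteriorAlgebra R M) = τ a (g x : ExteriorAlgebra R M)) :
    g ⟨1, SetLike.one_mem_graded _⟩ = 0 := by
  set y := g ⟨1, SetLike.one_mem_graded _⟩
  let b := Module.Free.chooseBasis R M
  have hvac : ∀ i, creation R (b i) (annihilation (b.coord i) (y : ExteriorAlgebra R M)) = 0 := by
    intro i
    obtain ⟨a, ha, hτa⟩ := exists_mem_even_map_eq_mul hτ (creation_mem_fieldOperators (b i))
      (annihilation_mem_fieldOperators (b.coord i))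
    have := hg a ha ⟨1, SetLike.one_mem_graded _⟩ 0 (by simp [hτa, annihilation_one])
    simpa [hτa] using this.symm
  have hscalar := eq_algebraMap_of_creation_annihilation_eq_zero b hvac
  refine Subtype.ext (Submodule.disjoint_def.1 (disjoint_evenOdd_add_one _ 0) _ ?_ y.2)
  rw [hscalar]
  exact SetLike.algebraMap_mem_graded (evenOdd (0 : QuadraticForm R M)) _

end Representation

open CliffordAlgebra (evenOdd) in
theorem half_spin_even_odd_general {K M V : Type*} [Field K] [AddCommGroup M] [Module K M]
    [FiniteDimensional K M] [Nontrivial M] [AddCommGroup V] [Module K V] {Q : QuadraticForm K V}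
    (τ : CliffordAlgebra Q →ₐ[K] Module.End K (ExteriorAlgebra K M))
    (hτ : LinearMap.range (τ.toLinearMap ∘ₗ CliffordAlgebra.ι Q) = fieldOperators K M) :
    (∀ i, ∀ a ∈ evenOdd Q 0,
        ∀ x ∈ evenOdd (0 : QuadraticForm K M) i,
          τ a x ∈ evenOdd (0 : QuadraticForm K M) i) ∧
    (∀ i, evenOdd (0 : QuadraticForm K M) i ≠ ⊥) ∧
    (∀ i, ∀ U ≤ evenOdd (0 : QuadraticForm K M) i,
        (∀ a ∈ evenOdd Q 0, ∀ x ∈ U, τ a x ∈ U) →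
        U = ⊥ ∨ U = evenOdd (0 : QuadraticForm K M) i) ∧
    ¬ ∃ g : evenOdd (0 : QuadraticForm K M) 0 ≃ₗ[K]
          evenOdd (0 : QuadraticForm K M) 1,
        ∀ a ∈ evenOdd Q 0,
          ∀ x y : evenOdd (0 : QuadraticForm K M) 0,
            (y : ExteriorAlgebra K M) = τ a (x : ExteriorAlgebra K M) →
              (g y : ExteriorAlgebra K M) = τ a (g x : ExteriorAlgebra K M) := by
  refine ⟨apply_mem_evenOdd_of_mem_even hτ.le, exteriorAlgebra_evenOdd_ne_bot, fun i U hUi hU =>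
    eq_bot_or_eq_evenOdd_of_fieldOperators_smul_smul_le hUi
      (fieldOperators_smul_smul_le_of_even_invariant hτ.ge hU), ?_⟩
  rintro ⟨g, hg⟩
  have hone := (LinearEquiv.map_eq_zero_iff g).1 (even_intertwiner_apply_one hτ.ge g.toLinearMap hg)
  exact one_ne_zero (congrArg Subtype.val hone)

section IsotropicDecomposition

theorem inv_sqrt_two_mul_self : (Real.sqrt 2 : ℂ)⁻¹ * (Real.sqrt 2 : ℂ)⁻¹ = 2⁻¹ := by
  rw [← mul_inv, ← Complex.ofReal_mul, Real.mul_self_sqrt zero_le_two, Complex.ofReal_ofNat]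

theorem pairingLin_apply {n : ℕ} (v x : Fin n → ℂ) : pairingLin n v x = v ⬝ᵥ x := by
  simp [pairingLin, dotProduct]

theorem fbarvec_dotProduct_fvec {n j : ℕ} (hj : 2 * j + 1 < n) (k : ℕ) :
    fbarvec n j ⬝ᵥ fvec n k = if j = k then -1 else 0 := by
  split_ifs with hjk
  · subst hjk
    rw [dotProduct, Fintype.sum_eq_add (⟨2 * j, by omega⟩ : Fin n) ⟨2 * j + 1, hj⟩ (by simp)]
    · simp only [fbarvec, fvec, if_true, Nat.succ_ne_self, if_false, neg_mul, mul_mul_mul_comm,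
        inv_sqrt_two_mul_self, I_mul_I]
      norm_num
    · rintro i ⟨hi, hi'⟩
      rw [fbarvec, if_neg (Fin.val_ne_of_ne hi), if_neg (Fin.val_ne_of_ne hi'), zero_mul]
  · refine Finset.sum_eq_zero fun i _ => ?_
    simp only [fbarvec, fvec]
    split_ifs <;> first | omega | simp

theorem evec_two_mul (n j : ℕ) :
    evec n (2 * j) = (Real.sqrt 2 : ℂ)⁻¹ • (fvec n j - fbarvec n j) := by
  ext i
  simp only [evec, fvec, fbarvec, Pi.smul_apply, Pi.sub_apply, smul_eq_mul]
  split_ifs <;> simp only [sub_neg_eq_add, mul_add, inv_sqrt_two_mul_self, sub_self, mul_zero]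
  norm_num

theorem evec_two_mul_add_one (n j : ℕ) :
    evec n (2 * j + 1) = (-I * (Real.sqrt 2 : ℂ)⁻¹) • (fvec n j + fbarvec n j) := by
  ext i
  simp only [evec, fvec, fbarvec, Pi.smul_apply, Pi.add_apply, smul_eq_mul]
  split_ifs <;> first | omega | simp only [mul_add, mul_mul_mul_comm, inv_sqrt_two_mul_self,
    neg_mul, I_mul_I, add_neg_cancel, mul_zero, add_zero]
  norm_num

theorem fvec_mem_Wsub {n m j : ℕ} (hj : j < m) : fvec n j ∈ Wsub n m :=
  Submodule.subset_span ⟨⟨j, hj⟩, rfl⟩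

theorem fbarvec_mem_Wbarsub {n m j : ℕ} (hj : j < m) : fbarvec n j ∈ Wbarsub n m :=
  Submodule.subset_span ⟨⟨j, hj⟩, rfl⟩

theorem Wsub_sup_Wbarsub (m : ℕ) : Wsub (2 * m) m ⊔ Wbarsub (2 * m) m = ⊤ := by
  rw [eq_top_iff, ← (Pi.basisFun ℂ (Fin (2 * m))).span_eq, Submodule.span_le]
  rintro _ ⟨i, rfl⟩
  have hevec : Pi.basisFun ℂ (Fin (2 * m)) i = evec (2 * m) i := by
    ext l
    simp [evec, Pi.single_apply, Fin.ext_iff]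
  obtain ⟨j, hj⟩ := Nat.even_or_odd' i
  have hjm : j < m := by omega
  have hf := Submodule.mem_sup_left (T := Wbarsub (2 * m) m) (fvec_mem_Wsub (n := 2 * m) hjm)
  have hfbar := Submodule.mem_sup_right (S := Wsub (2 * m) m)
    (fbarvec_mem_Wbarsub (n := 2 * m) hjm)
  rw [hevec, SetLike.mem_coe]
  rcases hj with hj | hj
  · rw [hj, evec_two_mul]
    exact Submodule.smul_mem _ _ (sub_mem hf hfbar)
  · rw [hj, evec_two_mul_add_one]
    exact Submodule.smul_mem _ _ (add_mem hf hfbar)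

theorem exists_pairingLin_comp_subtype_eq {m : ℕ} (d : Module.Dual ℂ (Wsub (2 * m) m)) :
    ∃ v : Wbarsub (2 * m) m, pairingLin (2 * m) v ∘ₗ (Wsub (2 * m) m).subtype = d := by
  let f (j : Fin m) : Wsub (2 * m) m := ⟨fvec (2 * m) j, fvec_mem_Wsub j.2⟩
  let fbar (j : Fin m) : Wbarsub (2 * m) m := ⟨fbarvec (2 * m) j, fbarvec_mem_Wbarsub j.2⟩
  have hspan : Submodule.span ℂ (Set.range f) = ⊤ := by
    apply Submodule.map_injective_of_injective (Wsub (2 * m) m).injective_subtype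
    rw [Submodule.map_span, Submodule.map_top, Submodule.range_subtype, ← Set.range_comp]
    rfl
  refine ⟨-∑ j, d (f j) • fbar j, LinearMap.ext_on_range hspan fun k => ?_⟩
  have hdual (j : Fin m) :
      fbarvec (2 * m) j ⬝ᵥ fvec (2 * m) k = if j = k then -1 else 0 := by
    simp only [fbarvec_dotProduct_fvec (show 2 * (j : ℕ) + 1 < 2 * m by omega), Fin.val_inj]
  simp [pairingLin_apply, f, fbar, sum_dotProduct, hdual]

theorem nontrivial_Wsub {n m : ℕ} (hm : 1 ≤ m) (hn : 1 ≤ n) : Nontrivial (Wsub n m) := by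
  refine (Submodule.nontrivial_iff_ne_bot).2 ((Submodule.ne_bot_iff _).2
    ⟨fvec n 0, fvec_mem_Wsub hm, fun h => ?_⟩)
  simpa [fvec] using congrFun h ⟨0, hn⟩

instance finiteDimensional_Wsub (n m : ℕ) : FiniteDimensional ℂ (Wsub n m) :=
  FiniteDimensional.span_of_finite ℂ (Set.finite_range _)

theorem range_comp_ι_eq_fieldOperators {m : ℕ}
    {τ : CliffordAlgebra (Qc (2 * m)) →ₐ[ℂ] Module.End ℂ (Spinor (2 * m) m)}
    (hτ : ∀ (u : Wsub (2 * m) m) (v : Wbarsub (2 * m) m) (x : Spinor (2 * m) m),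
        τ (CliffordAlgebra.ι (Qc (2 * m))
            ((u : Fin (2 * m) → ℂ) + (v : Fin (2 * m) → ℂ))) x =
          (Real.sqrt 2 : ℂ) • (ExteriorAlgebra.ι ℂ u * x) -
            (Real.sqrt 2 : ℂ) • intMul (2 * m) m (v : Fin (2 * m) → ℂ) x) :
    LinearMap.range (τ.toLinearMap ∘ₗ CliffordAlgebra.ι (Qc (2 * m))) =
      fieldOperators ℂ (Wsub (2 * m) m) := by
  have hτ_add (u : Wsub (2 * m) m) (v : Wbarsub (2 * m) m) :
      τ (CliffordAlgebra.ι (Qc (2 * m)) (u + v)) = (Real.sqrt 2 : ℂ) • creation ℂ u -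
        (Real.sqrt 2 : ℂ) • annihilation (pairingLin (2 * m) v ∘ₗ (Wsub (2 * m) m).subtype) :=
    LinearMap.ext (hτ u v)
  have hsqrt : (Real.sqrt 2 : ℂ) ≠ 0 := by simp
  apply le_antisymm
  · rintro _ ⟨x, rfl⟩
    have hx : x ∈ Wsub (2 * m) m ⊔ Wbarsub (2 * m) m := Wsub_sup_Wbarsub m ▸ Submodule.mem_top
    obtain ⟨u, hu, v, hv, rfl⟩ := Submodule.mem_sup.1 hx
    rw [LinearMap.comp_apply, AlgHom.toLinearMap_apply, hτ_add ⟨u, hu⟩ ⟨v, hv⟩]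
    exact sub_mem (Submodule.smul_mem _ _ (creation_mem_fieldOperators _))
      (Submodule.smul_mem _ _ (annihilation_mem_fieldOperators _))
  · refine sup_le ?_ ?_
    · rintro _ ⟨u, rfl⟩
      refine (Submodule.smul_mem_iff _ hsqrt).1 ⟨u + (0 : Wbarsub (2 * m) m), ?_⟩
      have hpair : pairingLin (2 * m) 0 = 0 := by simp [pairingLin]
      refine (hτ_add u 0).trans ?_
      rw [Submodule.coe_zero, hpair, LinearMap.zero_comp, map_zero, smul_zero, sub_zero]
    · rintro _ ⟨d, rfl⟩
      obtain ⟨v, rfl⟩ := exists_pairingLin_comp_subtype_eq d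
      refine (Submodule.smul_mem_iff _ (neg_ne_zero.2 hsqrt)).1
        ⟨(0 : Wsub (2 * m) m) + v, (hτ_add 0 v).trans ?_⟩
      rw [map_zero, smul_zero, zero_sub, neg_smul]

end IsotropicDecomposition

/-- Let `n = 2m` and `τ : ℂCl(2m) → End(⋀W_m)` the spinor representation,
`τ(u + v̄) = √2 ε(u) − √2 ι(v̄)`. Then `𝕊⁺ = ⋀^{even}W_m` and `𝕊⁻ = ⋀^{odd}W_m` are
invariant under `τ(a)` for every `a` in the even subalgebra `ℂCl⁰(2m)`; each of `𝕊⁺`, `𝕊⁻`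
is a simple module over `ℂCl⁰(2m)`; and `𝕊⁺` and `𝕊⁻` are not isomorphic as
`ℂCl⁰(2m)`-modules. -/
theorem half_spin_even_odd (m : ℕ) (hm : 1 ≤ m)
    (τ : CliffordAlgebra (Qc (2 * m)) →ₐ[ℂ] Module.End ℂ (Spinor (2 * m) m))
    (hτ : ∀ (u : Wsub (2 * m) m) (v : Wbarsub (2 * m) m) (x : Spinor (2 * m) m),
        τ (CliffordAlgebra.ι (Qc (2 * m))
            ((u : Fin (2 * m) → ℂ) + (v : Fin (2 * m) → ℂ))) x =
          (Real.sqrt 2 : ℂ) • (ExteriorAlgebra.ι ℂ u * x) -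
            (Real.sqrt 2 : ℂ) • intMul (2 * m) m (v : Fin (2 * m) → ℂ) x) :
    -- `𝕊⁺` and `𝕊⁻` are invariant under the even subalgebra
    (∀ a ∈ CliffordAlgebra.evenOdd (Qc (2 * m)) 0,
        ∀ x ∈ SpinorEven (2 * m) m, τ a x ∈ SpinorEven (2 * m) m) ∧
    (∀ a ∈ CliffordAlgebra.evenOdd (Qc (2 * m)) 0,
        ∀ x ∈ SpinorOdd (2 * m) m, τ a x ∈ SpinorOdd (2 * m) m) ∧
    -- each is a simple (in particular nonzero) module over `ℂCl⁰(2m)`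
    SpinorEven (2 * m) m ≠ ⊥ ∧ SpinorOdd (2 * m) m ≠ ⊥ ∧
    (∀ U : Submodule ℂ (Spinor (2 * m) m), U ≤ SpinorEven (2 * m) m →
        (∀ a ∈ CliffordAlgebra.evenOdd (Qc (2 * m)) 0, ∀ x ∈ U, τ a x ∈ U) →
        U = ⊥ ∨ U = SpinorEven (2 * m) m) ∧
    (∀ U : Submodule ℂ (Spinor (2 * m) m), U ≤ SpinorOdd (2 * m) m →
        (∀ a ∈ CliffordAlgebra.evenOdd (Qc (2 * m)) 0, ∀ x ∈ U, τ a x ∈ U) →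
        U = ⊥ ∨ U = SpinorOdd (2 * m) m) ∧
    -- `𝕊⁺` and `𝕊⁻` are not isomorphic as `ℂCl⁰(2m)`-modules
    ¬ ∃ g : SpinorEven (2 * m) m ≃ₗ[ℂ] SpinorOdd (2 * m) m,
        ∀ a ∈ CliffordAlgebra.evenOdd (Qc (2 * m)) 0,
          ∀ x y : SpinorEven (2 * m) m,
            (y : Spinor (2 * m) m) = τ a (x : Spinor (2 * m) m) →
              (g y : Spinor (2 * m) m) = τ a (g x : Spinor (2 * m) m) := by
  have := nontrivial_Wsub (n := 2 * m) hm (by omega)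
  obtain ⟨hinv, hne, hsimple, hniso⟩ :=
    half_spin_even_odd_general τ (range_comp_ι_eq_fieldOperators hτ)
  exact ⟨hinv 0, hinv 1, hne 0, hne 1, hsimple 0, hsimple 1, hniso⟩
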